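/- Assume 2b < a ≤ 3b and set E := w^3 − (xyz)^{3b-a} t u v. Then the Rees ideal 𝓘 of I = (x^a, y^a, z^a, (xyz)^b) equals the ideal of S generated by f1, f2, f3, g1, g2, g3, H1, H2, H3 and E. -/

import Mathlib

open MvPolynomial

/-!
The kernel of a map sending monomials to monomials is spanned by the differences of monomials with
the same image, so it suffices to show that the listed relations identify any two monomials
`x^α t^β w^s` and `x^α' t^β' w^s'` of equal multidegree. This works in `n` variables when
`(n - 1) b ≤ a`, with one relation trading `w^|σ|` for `∏_{i ∈ σ} t_i` for each set `σ` of
variables. If `s' < s`, then `∑ (β' i - β i) ≥ s - s'`, and a pigeonhole argument on these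
differences finds a `σ` whose relation applies to `x^α t^β w^s` and lowers `s` without passing `s'`.
If `s = s'`, the relations `x_i^a t_j = x_j^a t_i` move `β` to `β'` one unit at a time.
-/

section Pigeonhole

theorem exists_eq_mul_add_pos_le {n a b d : ℕ} (hn : 0 < n) (hd : 0 < d)
    (h : d < n ∨ n * b ≤ a) :
    ∃ q r, 0 < r ∧ r ≤ n ∧ d = n * q + r ∧ n * q * b ≤ a * q := by
  obtain hdn | hba := h
  · exact ⟨0, d, hd, hdn.le, by simp, by simp⟩
  · refine ⟨(d - 1) / n, (d - 1) % n + 1, Nat.succ_pos _, Nat.mod_lt _ hn, ?_, ?_⟩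
    · have := Nat.div_add_mod (d - 1) n
      omega
    · rw [mul_right_comm]
      exact Nat.mul_le_mul_right _ hba

variable {ι : Type*} [Fintype ι]

theorem le_card_filter_lt_of_le_sum {γ : ι → ℕ} {q r : ℕ} (hγ : ∀ i, γ i ≤ q + 1)
    (hsum : Fintype.card ι * q + r ≤ ∑ i, γ i) :
    r ≤ (Finset.univ.filter fun i => q < γ i).card := by
  have hle : ∑ i, γ i ≤ ∑ i, (q + if q < γ i then 1 else 0) :=
    Finset.sum_le_sum fun i _ => by
      have := hγ i
      split_ifs <;> omega
  rw [Finset.sum_add_distrib, ← Finset.card_filter, Finset.sum_const, Finset.card_univ,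
    smul_eq_mul] at hle
  omega

theorem exists_finset_forall_le_add_card_mul {a b d : ℕ} {α γ : ι → ℕ}
    (hab : Fintype.card ι * b ≤ a + b) (hd : 0 < d) (hsum : d ≤ ∑ i, γ i)
    (hα : ∀ i, a * γ i ≤ α i + d * b) :
    ∃ σ : Finset ι, σ.Nonempty ∧ σ.card ≤ d ∧ ∀ i ∈ σ, a ≤ α i + σ.card * b := by
  obtain ⟨i₀, -, -⟩ := Finset.exists_ne_zero_of_sum_ne_zero (hd.trans_le hsum).ne'
  have hι : 0 < Fintype.card ι := Fintype.card_pos_iff.2 ⟨i₀⟩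
  by_cases hfull : Fintype.card ι ≤ d ∧ a ≤ Fintype.card ι * b
  · exact ⟨Finset.univ, ⟨i₀, Finset.mem_univ i₀⟩, hfull.1, fun i _ => le_add_left hfull.2⟩
  obtain ⟨q, r, hr, hrn, rfl, hq⟩ : ∃ q r, 0 < r ∧ r ≤ Fintype.card ι ∧
      d = Fintype.card ι * q + r ∧ Fintype.card ι * q * b ≤ a * q :=
    exists_eq_mul_add_pos_le hι hd (by omega)
  have hrb : r * b ≤ a + b := (Nat.mul_le_mul_right b hrn).trans hab
  by_cases hγ : ∀ i, γ i ≤ q + 1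
  · obtain ⟨σ, hσ, rfl⟩ := Finset.exists_subset_card_eq (le_card_filter_lt_of_le_sum hγ hsum)
    refine ⟨σ, Finset.card_pos.1 hr, Nat.le_add_left _ _, fun i hi => ?_⟩
    have hqi : q + 1 ≤ γ i := (Finset.mem_filter.1 (hσ hi)).2
    linarith [hα i, Nat.mul_le_mul_left a hqi]
  · push Not at hγ
    obtain ⟨i, hi⟩ := hγ
    refine ⟨{i}, Finset.singleton_nonempty i, hd, fun j hj => ?_⟩
    obtain rfl := Finset.mem_singleton.1 hj
    rw [Finset.card_singleton]
    linarith [hα j, Nat.mul_le_mul_left a (Nat.succ_le_of_lt hi)]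

end Pigeonhole

section Exponents

variable {ι : Type*} [DecidableEq ι]

theorem exists_eq_add_single {f : ι → ℕ} {i : ι} {c : ℕ} (h : c ≤ f i) :
    ∃ g : ι → ℕ, f = g + Pi.single i c := by
  refine ⟨f - Pi.single i c, (tsub_add_cancel_of_le fun j => ?_).symm⟩
  obtain rfl | hj := eq_or_ne j i
  · rwa [Pi.single_eq_same]
  · rw [Pi.single_eq_of_ne hj]
    exact Nat.zero_le _

variable [Fintype ι]

theorem sum_tsub_add_single_lt {β β' : ι → ℕ} {i j : ι} (hi : β' i ≤ β i) (hj : β j < β' j) :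
    ∑ l, (β' l - (β + Pi.single j 1 : ι → ℕ) l) < ∑ l, (β' l - (β + Pi.single i 1 : ι → ℕ) l) := by
  have hji : j ≠ i := by
    rintro rfl
    exact hi.not_gt hj
  refine Finset.sum_lt_sum (fun l _ => ?_) ⟨j, Finset.mem_univ j, ?_⟩
  · obtain rfl | hl := eq_or_ne l i
    · exact (tsub_eq_zero_of_le (hi.trans (Nat.le_add_right _ _))).trans_le (Nat.zero_le _)
    · simp only [Pi.add_apply, Pi.single_eq_of_ne hl]
      omega
  · simp only [Pi.add_apply, Pi.single_eq_same, Pi.single_eq_of_ne hji]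
    omega

variable {M : Type*} [CommMonoid M]

theorem prod_pow_single (f : ι → M) (i : ι) (c : ℕ) :
    ∏ j, f j ^ (Pi.single i c : ι → ℕ) j = f i ^ c := by
  simp only [Pi.single_apply, pow_ite, pow_zero, Finset.prod_ite_eq', Finset.mem_univ, if_true]

theorem prod_pow_ite_mem (f : ι → M) (σ : Finset ι) (c : ℕ) :
    ∏ i, f i ^ (if i ∈ σ then c else 0) = (∏ i ∈ σ, f i) ^ c := by
  simp only [pow_ite, pow_zero, Finset.prod_ite_mem, Finset.univ_inter, Finset.prod_pow]

end Exponents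

/-- The monomial `x^α t^β w^s` in families `x`, `t` of elements and an element `w` of a commutative
monoid. For `x`, `t`, `w` the variables of `S = R[t, w]`, `R = k[x]`, these form a `k`-basis of
`S`. -/
def mixedMonomial {ι M : Type*} [Fintype ι] [CommMonoid M] (x t : ι → M) (w : M) (α β : ι → ℕ)
    (s : ℕ) : M :=
  (∏ i, x i ^ α i) * (∏ i, t i ^ β i) * w ^ s

/-- The defining relations of the Rees algebra of `(x_1^a, …, x_n^a, (x_1 ⋯ x_n)^b)`: the Koszul
relations `f`, and for each set `σ` of indices a relation trading `w^|σ|` for `∏_{i ∈ σ} t_i`. The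
forms `g`, `H` and `E` are the cases `|σ| = 1, 2, 3`. Truncated subtraction puts the power of
`∏_{i ∈ σ} x_i` on whichever side its exponent is nonnegative. -/
structure SylvesterRelations {ι M : Type*} [Fintype ι] [DecidableEq ι] [CommMonoid M] (a b : ℕ)
    (x t : ι → M) (w : M) : Prop where
  koszul (i j : ι) : x i ^ a * t j = x j ^ a * t i
  sylvester (σ : Finset ι) : (∏ i ∈ σ, x i) ^ (a - σ.card * b) * w ^ σ.card =
    (∏ i ∈ σ, x i) ^ (σ.card * b - a) * (∏ i ∈ σᶜ, x i) ^ (σ.card * b) * ∏ i ∈ σ, t i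

section Monoid

variable {ι M N P : Type*} [Fintype ι] [CommMonoid M] [CommMonoid N] [CommMonoid P]

theorem map_mixedMonomial {F : Type*} [FunLike F M N] [MonoidHomClass F M N] (f : F) (x t : ι → M)
    (w : M) (α β : ι → ℕ) (s : ℕ) :
    f (mixedMonomial x t w α β s) =
      mixedMonomial (fun i => f (x i)) (fun i => f (t i)) (f w) α β s := by
  simp only [mixedMonomial, map_mul, map_prod, map_pow]

theorem mixedMonomial_add (x t : ι → M) (w : M) (α α' β β' : ι → ℕ) (s s' : ℕ) :
    mixedMonomial x t w (α + α') (β + β') (s + s') =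
      mixedMonomial x t w α β s * mixedMonomial x t w α' β' s' := by
  simp only [mixedMonomial, Pi.add_apply, pow_add, Finset.prod_mul_distrib]
  ac_rfl

theorem mixedMonomial_rees (x : ι → M) (T : M) (a b : ℕ) (α β : ι → ℕ) (s : ℕ) :
    mixedMonomial x (fun i => x i ^ a * T) ((∏ i, x i) ^ b * T) α β s =
      (∏ i, x i ^ (α i + a * β i + b * s)) * T ^ (∑ i, β i + s) := by
  simp only [mixedMonomial, mul_pow, ← pow_mul, pow_add, Finset.prod_mul_distrib,
    Finset.prod_pow_eq_pow_sum, Finset.prod_pow]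
  ac_rfl

variable [DecidableEq ι]

namespace SylvesterRelations

variable {a b : ℕ} {x t : ι → M} {w : M}

theorem rees (a b : ℕ) (x : ι → M) (T : M) :
    SylvesterRelations a b x (fun i => x i ^ a * T) ((∏ i, x i) ^ b * T) where
  koszul i j := by ac_rfl
  sylvester σ := by
    have hexp : (a - σ.card * b) + σ.card * b = (σ.card * b - a) + a := by omega
    calc (∏ i ∈ σ, x i) ^ (a - σ.card * b) * ((∏ i, x i) ^ b * T) ^ σ.card
        = (∏ i ∈ σ, x i) ^ (a - σ.card * b + σ.card * b) * (∏ i ∈ σᶜ, x i) ^ (σ.card * b) *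
            T ^ σ.card := by
          rw [← Finset.prod_mul_prod_compl σ x, mul_pow _ T, ← pow_mul', mul_pow, pow_add]
          ac_rfl
      _ = (∏ i ∈ σ, x i) ^ (σ.card * b - a) * (∏ i ∈ σᶜ, x i) ^ (σ.card * b) *
            ∏ i ∈ σ, x i ^ a * T := by
          rw [hexp, pow_add, Finset.prod_mul_distrib, Finset.prod_pow, Finset.prod_const]
          ac_rfl

theorem of_map {F G : Type*} [FunLike F M N] [MonoidHomClass F M N] [FunLike G M P]
    [MonoidHomClass G M P] {f : F} {g : G} (hfg : ∀ p q, f p = f q → g p = g q)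
    (h : SylvesterRelations a b (fun i => f (x i)) (fun i => f (t i)) (f w)) :
    SylvesterRelations a b (fun i => g (x i)) (fun i => g (t i)) (g w) where
  koszul i j := by
    simpa only [map_mul, map_pow] using hfg (x i ^ a * t j) (x j ^ a * t i)
      (by simpa only [map_mul, map_pow] using h.koszul i j)
  sylvester σ := by
    simpa only [map_mul, map_pow, map_prod] using hfg
      ((∏ i ∈ σ, x i) ^ (a - σ.card * b) * w ^ σ.card)
      ((∏ i ∈ σ, x i) ^ (σ.card * b - a) * (∏ i ∈ σᶜ, x i) ^ (σ.card * b) * ∏ i ∈ σ, t i)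
      (by simpa only [map_mul, map_pow, map_prod] using h.sylvester σ)

theorem mixedMonomial_exchange (h : SylvesterRelations a b x t w) (i j : ι) (α β : ι → ℕ)
    (s : ℕ) :
    mixedMonomial x t w (α + Pi.single j a) (β + Pi.single i 1) s =
      mixedMonomial x t w (α + Pi.single i a) (β + Pi.single j 1) s := by
  rw [← add_zero s, mixedMonomial_add, mixedMonomial_add]
  simp only [mixedMonomial, prod_pow_single, pow_one, h.koszul i j]

theorem mixedMonomial_sylvester (h : SylvesterRelations a b x t w) (σ : Finset ι) (α β : ι → ℕ)
    (s : ℕ) :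
    mixedMonomial x t w (α + fun i => if i ∈ σ then a - σ.card * b else 0) β (s + σ.card) =
      mixedMonomial x t w
        (α + ((fun i => if i ∈ σ then σ.card * b - a else 0) +
          fun i => if i ∈ σᶜ then σ.card * b else 0))
        (β + fun i => if i ∈ σ then 1 else 0) s := by
  have hσ := congrArg (mixedMonomial x t w α β s * ·) (h.sylvester σ)
  simp only [mixedMonomial, Pi.add_apply, pow_add, Finset.prod_mul_distrib, prod_pow_ite_mem,
    pow_one] at hσ ⊢
  convert hσ using 1 <;> ac_rfl

theorem mixedMonomial_congr_of_eq (h : SylvesterRelations a b x t w) {α β α' β' : ι → ℕ} (s : ℕ)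
    (hx : ∀ i, α i + a * β i = α' i + a * β' i) (hT : ∑ i, β i = ∑ i, β' i) :
    mixedMonomial x t w α β s = mixedMonomial x t w α' β' s := by
  induction hm : ∑ i, (β' i - β i) using Nat.strong_induction_on generalizing α β with
  | _ m ih =>
  by_cases hle : ∀ i ∈ Finset.univ, β i ≤ β' i
  · have hββ' := (Finset.sum_eq_sum_iff_of_le hle).1 hT
    obtain rfl : β = β' := funext fun i => hββ' i (Finset.mem_univ i)
    obtain rfl : α = α' := funext fun i => add_right_cancel (hx i)
    rfl
  push Not at hle
  obtain ⟨i, -, hi⟩ := hle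
  obtain ⟨j, hj⟩ : ∃ j, β j < β' j := by
    by_contra! hge
    exact hT.not_gt (Finset.sum_lt_sum (fun i _ => hge i) ⟨i, Finset.mem_univ i, hi⟩)
  have haj : a ≤ α j := by linarith [hx j, Nat.mul_le_mul_left a (Nat.succ_le_of_lt hj)]
  obtain ⟨α₀, rfl⟩ := exists_eq_add_single haj
  obtain ⟨β₀, rfl⟩ := exists_eq_add_single (Nat.one_le_of_lt hi)
  have hi₀ : β' i ≤ β₀ i := by
    rwa [Pi.add_apply, Pi.single_eq_same, Nat.lt_succ_iff] at hi
  have hj₀ : β₀ j < β' j := (Nat.le_add_right _ _).trans_lt hj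
  rw [h.mixedMonomial_exchange]
  refine ih _ (hm ▸ sum_tsub_add_single_lt hi₀ hj₀) (fun l => ?_) ?_ rfl
  · rw [← hx l]
    simp only [Pi.add_apply, Pi.single_apply]
    split_ifs <;> ring
  · rw [← hT]
    simp [Finset.sum_add_distrib]

theorem exists_mixedMonomial_eq (h : SylvesterRelations a b x t w) {σ : Finset ι}
    {α : ι → ℕ} (hα : ∀ i ∈ σ, a ≤ α i + σ.card * b) (β : ι → ℕ) (s : ℕ) :
    ∃ α' β' : ι → ℕ, mixedMonomial x t w α β (s + σ.card) = mixedMonomial x t w α' β' s ∧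
      (∀ i, α' i + a * β' i = α i + a * β i + b * σ.card) ∧ ∑ i, β' i = ∑ i, β i + σ.card := by
  obtain ⟨α₀, rfl⟩ : ∃ α₀, α = α₀ + fun i => if i ∈ σ then a - σ.card * b else 0 := by
    refine ⟨_, (tsub_add_cancel_of_le fun i => ?_).symm⟩
    beta_reduce
    split_ifs with hi
    · exact tsub_le_iff_right.2 (hα i hi)
    · exact Nat.zero_le _
  refine ⟨_, _, h.mixedMonomial_sylvester σ α₀ β s, fun i => ?_, ?_⟩
  · have hexp : a - σ.card * b + σ.card * b = σ.card * b - a + a := by omega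
    by_cases hi : i ∈ σ
    · simp only [Pi.add_apply, hi, if_true, Finset.mem_compl, not_true_eq_false, if_false]
      linarith
    · simp only [Pi.add_apply, hi, if_false, Finset.mem_compl, not_false_eq_true, if_true]
      ring
  · simp [Finset.sum_add_distrib]

theorem mixedMonomial_congr (h : SylvesterRelations a b x t w)
    (hab : Fintype.card ι * b ≤ a + b) {α β α' β' : ι → ℕ} {s s' : ℕ}
    (hx : ∀ i, α i + a * β i + b * s = α' i + a * β' i + b * s')
    (hT : ∑ i, β i + s = ∑ i, β' i + s') :
    mixedMonomial x t w α β s = mixedMonomial x t w α' β' s' := by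
  wlog hs : s' ≤ s generalizing α β α' β' s s'
  · exact (this (fun i => (hx i).symm) hT.symm (le_of_not_ge hs)).symm
  induction s using Nat.strong_induction_on generalizing α β with
  | _ s ih =>
  obtain rfl | hlt := hs.eq_or_lt
  · exact h.mixedMonomial_congr_of_eq _ (fun i => add_right_cancel (hx i)) (add_right_cancel hT)
  obtain ⟨d, rfl⟩ := exists_add_of_le hs
  have hsum : d ≤ ∑ i, (β' i - β i) := by
    have : ∑ i, β' i ≤ ∑ i, (β' i - β i) + ∑ i, β i := by
      rw [← Finset.sum_add_distrib]
      exact Finset.sum_le_sum fun i _ => le_tsub_add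
    omega
  have hα (i : ι) : a * (β' i - β i) ≤ α i + d * b := by
    have := hx i
    rw [Nat.mul_sub, tsub_le_iff_right]
    linarith
  obtain ⟨σ, hσ, hcard, hle⟩ := exists_finset_forall_le_add_card_mul hab (by omega) hsum hα
  obtain ⟨d, rfl⟩ := Nat.exists_eq_add_of_le' hcard
  obtain ⟨α₁, β₁, heq, hx₁, hT₁⟩ := h.exists_mixedMonomial_eq hle β (s' + d)
  rw [← add_assoc, heq]
  refine ih _ ?_ (fun i => ?_) ?_ (Nat.le_add_right s' d)
  · have := hσ.card_pos
    omega
  · linarith [hx i, hx₁ i]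
  · omega

end SylvesterRelations

end Monoid

section FinThree

variable {M : Type*} [CommMonoid M]

theorem finset_fin_three_cases (σ : Finset (Fin 3)) :
    σ = ∅ ∨ σ = {0} ∨ σ = {1} ∨ σ = {2} ∨ σ = {0, 1} ∨ σ = {0, 2} ∨ σ = {1, 2} ∨
      σ = Finset.univ := by
  decide +revert

theorem sylvesterRelations_fin_three_iff {a b : ℕ} (hab : 2 * b ≤ a) (x y z t u v w : M) :
    SylvesterRelations a b ![x, y, z] ![t, u, v] w ↔
      x ^ a * u = y ^ a * t ∧
      x ^ a * v = z ^ a * t ∧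
      y ^ a * v = z ^ a * u ∧
      x ^ (a - b) * w = (y * z) ^ b * t ∧
      y ^ (a - b) * w = (x * z) ^ b * u ∧
      z ^ (a - b) * w = (x * y) ^ b * v ∧
      (x * y) ^ (a - 2 * b) * w ^ 2 = z ^ (2 * b) * t * u ∧
      (x * z) ^ (a - 2 * b) * w ^ 2 = y ^ (2 * b) * t * v ∧
      (y * z) ^ (a - 2 * b) * w ^ 2 = x ^ (2 * b) * u * v ∧
      (x * y * z) ^ (a - 3 * b) * w ^ 3 = (x * y * z) ^ (3 * b - a) * t * u * v := by
  have hba : b - a = 0 := by omega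
  have h2ba : 2 * b - a = 0 := by omega
  have hc0 : ({0} : Finset (Fin 3))ᶜ = {1, 2} := by decide
  have hc1 : ({1} : Finset (Fin 3))ᶜ = {0, 2} := by decide
  have hc2 : ({2} : Finset (Fin 3))ᶜ = {0, 1} := by decide
  have hc01 : ({0, 1} : Finset (Fin 3))ᶜ = {2} := by decide
  have hc02 : ({0, 2} : Finset (Fin 3))ᶜ = {1} := by decide
  have hc12 : ({1, 2} : Finset (Fin 3))ᶜ = {0} := by decide
  constructor
  · intro h
    refine ⟨h.koszul 0 1, h.koszul 0 2, h.koszul 1 2, ?_, ?_, ?_, ?_, ?_, ?_, ?_⟩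
    · simpa [hba, hc0] using h.sylvester {0}
    · simpa [hba, hc1] using h.sylvester {1}
    · simpa [hba, hc2] using h.sylvester {2}
    · simpa [h2ba, hc01, mul_assoc] using h.sylvester {0, 1}
    · simpa [h2ba, hc02, mul_assoc] using h.sylvester {0, 2}
    · simpa [h2ba, hc12, mul_assoc] using h.sylvester {1, 2}
    · simpa [Fin.prod_univ_three, mul_assoc] using h.sylvester .univ
  · rintro ⟨f1, f2, f3, g1, g2, g3, H1, H2, H3, hE⟩
    refine ⟨fun i j => ?_, fun σ => ?_⟩
    · fin_cases i <;> fin_cases j <;> simp [*]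
    · rcases finset_fin_three_cases σ with rfl | rfl | rfl | rfl | rfl | rfl | rfl | rfl
      · simp
      · simpa [hba, hc0] using g1
      · simpa [hba, hc1] using g2
      · simpa [hba, hc2] using g3
      · simpa [h2ba, hc01, mul_assoc] using H1
      · simpa [h2ba, hc02, mul_assoc] using H2
      · simpa [h2ba, hc12, mul_assoc] using H3
      · simpa [Fin.prod_univ_three, mul_assoc] using hE

end FinThree

theorem ker_le_ker_of_map_basis {R V W U ι κ : Type*} [Semiring R]
    [AddCommMonoid V] [Module R V] [AddCommMonoid W] [Module R W] [AddCommMonoid U] [Module R U]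
    (B : Module.Basis ι R V) (D : Module.Basis κ R W) {F : V →ₗ[R] W} {G : V →ₗ[R] U} {π : ι → κ}
    (hF : ∀ i, F (B i) = D (π i)) (hG : (G ∘ B).FactorsThrough π) :
    LinearMap.ker F ≤ LinearMap.ker G := by
  let L : W →ₗ[R] U := D.constr ℕ (Function.extend π (G ∘ B) 0)
  have hL : G = L ∘ₗ F := B.ext fun i => by
    rw [LinearMap.comp_apply, hF, Module.Basis.constr_basis, hG.extend_apply, Function.comp_apply]
  exact hL ▸ LinearMap.ker_le_ker_comp F L

section Rees

theorem monomial_one_eq_prod_X_pow {τ R : Type*} [Fintype τ] [CommSemiring R] (d : τ →₀ ℕ) :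
    monomial d (1 : R) = ∏ i, X i ^ d i := by
  rw [monomial_eq, C_1, one_mul, Finsupp.prod_fintype _ _ fun _ => pow_zero _]

variable (k : Type*) [CommSemiring k] (n a b : ℕ)

/-- The map `S → R[T]` of `R`-algebras, `R = k[x_1, …, x_n]`, whose kernel is the Rees ideal of
`(x_1^a, …, x_n^a, (x_1 ⋯ x_n)^b)`. The last of the `n + 1` variables of `S` is `w`. -/
noncomputable def reesMap : MvPolynomial (Fin (n + 1)) (MvPolynomial (Fin n) k)
    →ₐ[MvPolynomial (Fin n) k] Polynomial (MvPolynomial (Fin n) k) :=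
  aeval (Fin.snoc (fun i => Polynomial.C (X i ^ a) * Polynomial.X)
    (Polynomial.C ((∏ i, X i) ^ b) * Polynomial.X))

/-- The `k`-basis of `S` consisting of its monomials in all `2 n + 1` variables, indexed by the
exponents of the variables of `R` and of those adjoined to `R`. -/
noncomputable def reesBasis :
    Module.Basis ((Fin n →₀ ℕ) × (Fin (n + 1) →₀ ℕ)) k
      (MvPolynomial (Fin (n + 1)) (MvPolynomial (Fin n) k)) :=
  (basisMonomials (Fin n) k).smulTower (basisMonomials (Fin (n + 1)) (MvPolynomial (Fin n) k))

/-- The `k`-basis of `R[T]` consisting of its monomials. -/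
noncomputable def reesTargetBasis :
    Module.Basis ((Fin n →₀ ℕ) × ℕ) k (Polynomial (MvPolynomial (Fin n) k)) :=
  (basisMonomials (Fin n) k).smulTower (Polynomial.basisMonomials (MvPolynomial (Fin n) k))

/-- The exponents of the image under `reesMap` of a monomial of `S`. -/
noncomputable def reesDegree (d : (Fin n →₀ ℕ) × (Fin (n + 1) →₀ ℕ)) : (Fin n →₀ ℕ) × ℕ :=
  (Finsupp.equivFunOnFinite.symm fun i => d.1 i + a * d.2 i.castSucc + b * d.2 (Fin.last n),
    ∑ i : Fin n, d.2 i.castSucc + d.2 (Fin.last n))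

theorem reesBasis_apply (d : (Fin n →₀ ℕ) × (Fin (n + 1) →₀ ℕ)) :
    reesBasis k n d = mixedMonomial (fun i => C (X i)) (fun i => X i.castSucc) (X (Fin.last n))
      d.1 (fun i => d.2 i.castSucc) (d.2 (Fin.last n)) := by
  simp only [reesBasis, Module.Basis.smulTower_apply, coe_basisMonomials,
    monomial_one_eq_prod_X_pow, smul_eq_C_mul, mixedMonomial, map_prod, map_pow,
    Fin.prod_univ_castSucc, mul_assoc]

theorem reesTargetBasis_apply (e : (Fin n →₀ ℕ) × ℕ) :
    reesTargetBasis k n e = Polynomial.C (∏ i, X i ^ e.1 i) * Polynomial.X ^ e.2 := by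
  rw [reesTargetBasis, Module.Basis.smulTower_apply, coe_basisMonomials,
    Polynomial.coe_basisMonomials]
  beta_reduce
  rw [monomial_one_eq_prod_X_pow, Polynomial.smul_monomial, smul_eq_mul, mul_one,
    Polynomial.C_mul_X_pow_eq_monomial]

theorem reesMap_C (r : MvPolynomial (Fin n) k) : reesMap k n a b (C r) = Polynomial.C r :=
  algHom_C _ r

theorem reesMap_X_castSucc (i : Fin n) :
    reesMap k n a b (X i.castSucc) = Polynomial.C (X i) ^ a * Polynomial.X := by
  rw [reesMap, aeval_X, Fin.snoc_castSucc, map_pow]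

theorem reesMap_X_last :
    reesMap k n a b (X (Fin.last n)) = (∏ i, Polynomial.C (X i)) ^ b * Polynomial.X := by
  rw [reesMap, aeval_X, Fin.snoc_last, map_pow, map_prod]

theorem reesMap_reesBasis (d : (Fin n →₀ ℕ) × (Fin (n + 1) →₀ ℕ)) :
    reesMap k n a b (reesBasis k n d) = reesTargetBasis k n (reesDegree n a b d) := by
  simp only [reesBasis_apply, map_mixedMonomial, reesMap_C, reesMap_X_castSucc, reesMap_X_last,
    mixedMonomial_rees, reesTargetBasis_apply, reesDegree, map_prod, map_pow,
    Finsupp.equivFunOnFinite_symm_apply_apply]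

theorem sylvesterRelations_reesMap :
    SylvesterRelations a b (fun i => reesMap k n a b (C (X i)))
      (fun i => reesMap k n a b (X i.castSucc)) (reesMap k n a b (X (Fin.last n))) := by
  simp only [reesMap_C, reesMap_X_castSucc, reesMap_X_last]
  exact SylvesterRelations.rees a b _ _

end Rees

section ReesIdeal

variable {k : Type*} [CommRing k] {n a b : ℕ}

theorem ker_reesMap_le_iff (hab : n * b ≤ a + b)
    (K : Ideal (MvPolynomial (Fin (n + 1)) (MvPolynomial (Fin n) k))) :
    RingHom.ker (reesMap k n a b) ≤ K ↔
      SylvesterRelations a b (fun i => Ideal.Quotient.mk K (C (X i)))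
        (fun i => Ideal.Quotient.mk K (X i.castSucc)) (Ideal.Quotient.mk K (X (Fin.last n))) := by
  constructor
  · intro hle
    refine (sylvesterRelations_reesMap k n a b).of_map fun p q hpq => Ideal.Quotient.eq.2 (hle ?_)
    rw [RingHom.mem_ker, map_sub, hpq, sub_self]
  · intro h
    have hab' : Fintype.card (Fin n) * b ≤ a + b := by rwa [Fintype.card_fin]
    have hker : LinearMap.ker ((reesMap k n a b).toLinearMap.restrictScalars k) ≤
        LinearMap.ker (Ideal.Quotient.mkₐ k K).toLinearMap := by
      refine ker_le_ker_of_map_basis (reesBasis k n) (reesTargetBasis k n)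
        (reesMap_reesBasis k n a b) fun d d' hd => ?_
      simp only [reesDegree, Prod.mk.injEq, EmbeddingLike.apply_eq_iff_eq, _root_.funext_iff] at hd
      change Ideal.Quotient.mk K (reesBasis k n d) = Ideal.Quotient.mk K (reesBasis k n d')
      simp only [reesBasis_apply, map_mixedMonomial]
      exact h.mixedMonomial_congr hab' hd.1 hd.2
    exact fun p hp => Ideal.Quotient.eq_zero_iff_mem.1 (hker hp)

end ReesIdeal

theorem reesMap_fin_three {k : Type*} [CommSemiring k] (a b : ℕ) :
    reesMap k 3 a b =
      aeval ![Polynomial.C (X 0 ^ a) * Polynomial.X, Polynomial.C (X 1 ^ a) * Polynomial.X,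
        Polynomial.C (X 2 ^ a) * Polynomial.X,
        Polynomial.C ((X 0 * X 1 * X 2) ^ b) * Polynomial.X] := by
  refine algHom_ext fun i => ?_
  simp only [reesMap, aeval_X]
  rw [Fin.prod_univ_three]
  fin_cases i <;> rfl

theorem stmt16_general {k : Type*} [CommRing k] (a b : ℕ) (h2b : 2 * b ≤ a) :
    let R := MvPolynomial (Fin 3) k
    let x : R := X 0
    let y : R := X 1
    let z : R := X 2
    let S := MvPolynomial (Fin 4) R
    let t : S := X 0
    let u : S := X 1
    let v : S := X 2
    let w : S := X 3
    let ψ : S →ₐ[R] Polynomial R :=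
      aeval ![Polynomial.C (x ^ a) * Polynomial.X, Polynomial.C (y ^ a) * Polynomial.X,
        Polynomial.C (z ^ a) * Polynomial.X,
        Polynomial.C ((x * y * z) ^ b) * Polynomial.X]
    RingHom.ker ψ.toRingHom = Ideal.span
      { C (x ^ a) * u - C (y ^ a) * t,
        C (x ^ a) * v - C (z ^ a) * t,
        C (y ^ a) * v - C (z ^ a) * u,
        C (x ^ (a - b)) * w - C ((y * z) ^ b) * t,
        C (y ^ (a - b)) * w - C ((x * z) ^ b) * u,
        C (z ^ (a - b)) * w - C ((x * y) ^ b) * v,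
        C ((x * y) ^ (a - 2 * b)) * w ^ 2 - C (z ^ (2 * b)) * t * u,
        C ((x * z) ^ (a - 2 * b)) * w ^ 2 - C (y ^ (2 * b)) * t * v,
        C ((y * z) ^ (a - 2 * b)) * w ^ 2 - C (x ^ (2 * b)) * u * v,
        C ((x * y * z) ^ (a - 3 * b)) * w ^ 3 - C ((x * y * z) ^ (3 * b - a)) * t * u * v } := by
  intro R x y z S t u v w ψ
  have hψ : RingHom.ker ψ.toRingHom = RingHom.ker (reesMap k 3 a b) := by
    rw [reesMap_fin_three]
    rfl
  rw [hψ]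
  refine eq_of_forall_ge_iff fun K => (ker_reesMap_le_iff (by omega) K).trans ?_
  let q := Ideal.Quotient.mk K
  have hx : (fun i : Fin 3 => q (C (X i))) = ![q (C x), q (C y), q (C z)] := by
    ext i
    fin_cases i <;> rfl
  have ht : (fun i : Fin 3 => q (X i.castSucc)) = ![q t, q u, q v] := by
    ext i
    fin_cases i <;> rfl
  rw [hx, ht, sylvesterRelations_fin_three_iff h2b, Ideal.span_le]
  simp only [Set.insert_subset_iff, Set.singleton_subset_iff, SetLike.mem_coe,
    ← Ideal.Quotient.eq, map_mul, map_pow]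
  rfl

/-- Let `I = (x^a, y^a, z^a, (xyz)^b) ⊆ k[x,y,z]` with
`2b < a ≤ 3b`, and let `𝓘` be the Rees ideal of `I` (kernel of `S = R[t,u,v,w] → R[T]`,
`t ↦ x^a T, u ↦ y^a T, v ↦ z^a T, w ↦ (xyz)^b T`).  Then
`𝓘 = (f1, f2, f3, g1, g2, g3, H1, H2, H3, E)` with `E = w^3 - (xyz)^{3b-a} t u v`. -/
theorem stmt16 {k : Type*} [Field k] (a b : ℕ) (hb : 0 < b) (h2b : 2 * b < a)
    (h3b : a ≤ 3 * b) :
    let R := MvPolynomial (Fin 3) k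
    let x : R := X 0
    let y : R := X 1
    let z : R := X 2
    let S := MvPolynomial (Fin 4) R
    let t : S := X 0
    let u : S := X 1
    let v : S := X 2
    let w : S := X 3
    let ψ : S →ₐ[R] Polynomial R :=
      aeval ![Polynomial.C (x ^ a) * Polynomial.X, Polynomial.C (y ^ a) * Polynomial.X,
        Polynomial.C (z ^ a) * Polynomial.X,
        Polynomial.C ((x * y * z) ^ b) * Polynomial.X]
    RingHom.ker ψ.toRingHom = Ideal.span
      { C (x ^ a) * u - C (y ^ a) * t,
        C (x ^ a) * v - C (z ^ a) * t,
        C (y ^ a) * v - C (z ^ a) * u,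
        C (x ^ (a - b)) * w - C ((y * z) ^ b) * t,
        C (y ^ (a - b)) * w - C ((x * z) ^ b) * u,
        C (z ^ (a - b)) * w - C ((x * y) ^ b) * v,
        C ((x * y) ^ (a - 2 * b)) * w ^ 2 - C (z ^ (2 * b)) * t * u,
        C ((x * z) ^ (a - 2 * b)) * w ^ 2 - C (y ^ (2 * b)) * t * v,
        C ((y * z) ^ (a - 2 * b)) * w ^ 2 - C (x ^ (2 * b)) * u * v,
        w ^ 3 - C ((x * y * z) ^ (3 * b - a)) * t * u * v } := by
  simpa only [Nat.sub_eq_zero_of_le h3b, pow_zero, map_one, one_mul] using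
    stmt16_general a b h2b.le
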